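/- Let (X_i)_{i≥1} be a sequence of topological spaces and f_i : X_i → X_{i+1} continuous maps, and let X be the mapping telescope of the sequence X_1 → X_2 → X_3 → …, that is, the quotient of the disjoint union ⨿_{i≥1} X_i × [0,1] by the identifications (x,1) ∈ X_i × [0,1] ∼ (f_i(x),0) ∈ X_{i+1} × [0,1], with the quotient topology. Let n be a positive integer and suppose that for every i the space X_i × X_i can be covered by n open (in X_i × X_i) sets, each vertically compressible to the diagonal of X_i within X_i × X_i. Then X × X can be covered by 2n open subsets of X × X, each vertically compressible to the diagonal Δ(X). -/

import Mathlib

open unitInterval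

/-- A subset `U` of `X × X` is *vertically compressible to the diagonal* `Δ(X)` if there is a
continuous map `h : U × [0,1] → X` with `h((x,y),0) = y` and `h((x,y),1) = x` for all
`(x,y) ∈ U`. -/
def VerticallyCompressible {X : Type*} [TopologicalSpace X] (U : Set (X × X)) : Prop :=
  ∃ h : U × I → X, Continuous h ∧
    (∀ p : U, h (p, 0) = (p : X × X).2) ∧
    (∀ p : U, h (p, 1) = (p : X × X).1)

/-- The gluing relation for the mapping telescope of a sequence of maps
`X₁ → X₂ → X₃ → ⋯`: the point `(x, 1)` of the `i`-th cylinder is identified with the point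
`(fᵢ x, 0)` of the `(i+1)`-st cylinder. -/
inductive TelescopeRel (X : ℕ → Type*) (f : ∀ i, X i → X (i + 1)) :
    (Σ i, X i × I) → (Σ i, X i × I) → Prop
  | glue (i : ℕ) (x : X i) : TelescopeRel X f ⟨i, x, 1⟩ ⟨i + 1, f i x, 0⟩

/-- The mapping telescope of a sequence of maps `X₁ → X₂ → X₃ → ⋯`, i.e. the quotient of
`⨿ᵢ Xᵢ × [0,1]` by the identifications `(x,1) ∼ (fᵢ x, 0)`, with the quotient topology. -/
def Telescope (X : ℕ → Type*) [∀ i, TopologicalSpace (X i)]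
    (f : ∀ i, X i → X (i + 1)) : Type _ :=
  Quot (TelescopeRel X f)

instance (X : ℕ → Type*) [∀ i, TopologicalSpace (X i)] (f : ∀ i, X i → X (i + 1)) :
    TopologicalSpace (Telescope X f) :=
  instTopologicalSpaceQuot

/-!
Every point `[x, t]` of the `k`-th cylinder has height `k + t`, and following the bonding maps it
can be raised continuously to any greater height. Raising everything below height `m` to height `m`
deforms that part of the telescope onto a copy of `X m`, so the `n` compressible sets covering
`X m × X m` pull back to `n` compressible sets covering the pairs of points below height `m`.
The pairs whose larger height lies in `(m - 1, m + 1)` form open bands covering the square of the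
telescope. Bands with `m` of the same parity are pairwise disjoint, so their compressions glue: `n`
sets suffice for the even bands and `n` for the odd ones.
-/

open Topology Set

section Compressible

variable {Y Z ι κ : Type*} [TopologicalSpace Y] [TopologicalSpace Z]

namespace VerticallyCompressible

theorem homotopic {U : Set (Y × Y)} (hU : VerticallyCompressible U) {a b : C(Z, Y)}
    (hab : ∀ z, (a z, b z) ∈ U) : b.Homotopic a := by
  obtain ⟨h, hcont, h0, h1⟩ := hU
  exact ⟨⟨⟨fun p => h (⟨_, hab p.2⟩, p.1), hcont.comp (by fun_prop)⟩,
    fun z => h0 ⟨_, hab z⟩, fun z => h1 ⟨_, hab z⟩⟩⟩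

theorem of_homotopic {U : Set (Y × Y)}
    (h : (⟨fun p => p.1.2, by fun_prop⟩ : C(U, Y)).Homotopic ⟨fun p => p.1.1, by fun_prop⟩) :
    VerticallyCompressible U := by
  obtain ⟨H⟩ := h
  exact ⟨fun p => H (p.2, p.1), by fun_prop, H.apply_zero, H.apply_one⟩

theorem mono {U V : Set (Y × Y)} (hU : VerticallyCompressible U) (hVU : V ⊆ U) :
    VerticallyCompressible V :=
  of_homotopic (hU.homotopic fun p => hVU p.2)

theorem iUnion {U : ι → Set (Y × Y)} (hopen : ∀ i, IsOpen (U i))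
    (hdisj : Pairwise (Function.onFun Disjoint U)) (hU : ∀ i, VerticallyCompressible (U i)) :
    VerticallyCompressible (⋃ i, U i) := by
  choose h hcont h0 h1 using hU
  let S (i : ι) : Set ((⋃ i, U i) × I) := {q | (q.1 : Y × Y) ∈ U i}
  let φ (i : ι) : C(S i, Y) := ⟨fun q => h i (⟨q.1.1, q.2⟩, q.1.2), (hcont i).comp (by fun_prop)⟩
  have hφ (i j : ι) (q) (hi : q ∈ S i) (hj : q ∈ S j) : φ i ⟨q, hi⟩ = φ j ⟨q, hj⟩ := by
    obtain rfl : i = j := hdisj.eq (not_disjoint_iff.2 ⟨_, hi, hj⟩)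
    rfl
  have hS (q) : ∃ i, S i ∈ 𝓝 q := by
    obtain ⟨i, hi⟩ := mem_iUnion.1 q.1.2
    exact ⟨i, ((hopen i).preimage (by fun_prop)).mem_nhds hi⟩
  let H := ContinuousMap.liftCover S φ hφ hS
  have hH (i : ι) (p : ⋃ i, U i) (hi : p.1 ∈ U i) (t : I) : H (p, t) = h i (⟨p, hi⟩, t) :=
    ContinuousMap.liftCover_coe (i := i) ⟨(p, t), hi⟩
  refine ⟨H, H.continuous, fun p => ?_, fun p => ?_⟩ <;>
    obtain ⟨i, hi⟩ := mem_iUnion.1 p.2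
  · exact (hH i p hi 0).trans (h0 i ⟨p, hi⟩)
  · exact (hH i p hi 1).trans (h1 i ⟨p, hi⟩)

theorem image_preimage_prodMap {D : Set Y} {r : C(D, Z)} {s : C(Z, Y)}
    (hrs : (⟨Subtype.val, continuous_subtype_val⟩ : C(D, Y)).Homotopic (s.comp r))
    {U : Set (Z × Z)} (hU : VerticallyCompressible U) :
    VerticallyCompressible
      (Prod.map Subtype.val Subtype.val '' (Prod.map r r ⁻¹' U) : Set (Y × Y)) := by
  set V : Set (Y × Y) := Prod.map Subtype.val Subtype.val '' (Prod.map r r ⁻¹' U)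
  have hVD (q : V) : ∃ (h₁ : q.1.1 ∈ D) (h₂ : q.1.2 ∈ D), (r ⟨_, h₁⟩, r ⟨_, h₂⟩) ∈ U := by
    obtain ⟨_, ⟨a, b⟩, hab, rfl⟩ := q
    exact ⟨a.2, b.2, hab⟩
  choose h₁ h₂ hV using hVD
  let a : C(V, D) := ⟨fun q => ⟨q.1.1, h₁ q⟩, by fun_prop⟩
  let b : C(V, D) := ⟨fun q => ⟨q.1.2, h₂ q⟩, by fun_prop⟩
  have hmid : (r.comp b).Homotopic (r.comp a) := hU.homotopic hV
  exact of_homotopic <| (hrs.comp (.refl b)).trans <|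
    ((ContinuousMap.Homotopic.refl s).comp hmid).trans (hrs.comp (.refl a)).symm

end VerticallyCompressible

/-- `HasCompressibleCover ι Q` says that `Q ⊆ Y × Y` is the union of a family, indexed by `ι`, of
open subsets of `Y × Y` vertically compressible to the diagonal of `Y`. For `ι = Fin n` this is the
relative form of the bound `TC ≤ n`, and `Q = univ` gives `TC(Y) ≤ n` itself. -/
def HasCompressibleCover (ι : Type*) (Q : Set (Y × Y)) : Prop :=
  ∃ U : ι → Set (Y × Y),
    (∀ j, IsOpen (U j)) ∧ ((⋃ j, U j) = Q) ∧ ∀ j, VerticallyCompressible (U j)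

namespace HasCompressibleCover

theorem reindex {Q : Set (Y × Y)} (e : κ ≃ ι) (hQ : HasCompressibleCover ι Q) :
    HasCompressibleCover κ Q := by
  obtain ⟨U, hopen, hcover, hU⟩ := hQ
  exact ⟨U ∘ e, fun _ => hopen _, (e.surjective.iUnion_comp U).trans hcover, fun _ => hU _⟩

theorem mono {P Q : Set (Y × Y)} (hQ : HasCompressibleCover ι Q) (hP : IsOpen P) (hPQ : P ⊆ Q) :
    HasCompressibleCover ι P := by
  obtain ⟨U, hopen, rfl, hU⟩ := hQ
  refine ⟨fun j => P ∩ U j, fun j => hP.inter (hopen j), ?_,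
    fun j => (hU j).mono inter_subset_right⟩
  rw [← inter_iUnion, inter_eq_left.2 hPQ]

theorem iUnion {Q : κ → Set (Y × Y)} (hQ : ∀ k, HasCompressibleCover ι (Q k)) :
    HasCompressibleCover (κ × ι) (⋃ k, Q k) := by
  choose U hopen hcover hU using hQ
  refine ⟨fun p => U p.1 p.2, fun p => hopen p.1 p.2, ?_, fun p => hU p.1 p.2⟩
  simp only [iUnion_prod', hcover]

theorem iUnion_of_disjoint {Q : κ → Set (Y × Y)} (hdisj : Pairwise (Function.onFun Disjoint Q))
    (hQ : ∀ k, HasCompressibleCover ι (Q k)) : HasCompressibleCover ι (⋃ k, Q k) := by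
  choose U hopen hcover hU using hQ
  have hUQ (k : κ) (j : ι) : U k j ⊆ Q k := hcover k ▸ subset_iUnion (U k) j
  refine ⟨fun j => ⋃ k, U k j, fun j => isOpen_iUnion fun k => hopen k j, ?_, fun j => ?_⟩
  · rw [iUnion_comm]
    exact iUnion_congr hcover
  · exact .iUnion (hopen · j) (fun k l hkl => (hdisj hkl).mono (hUQ k j) (hUQ l j)) (hU · j)

theorem prod_self_of_homotopic {D : Set Y} (hD : IsOpen D) {r : C(D, Z)} {s : C(Z, Y)}
    (hrs : (⟨Subtype.val, continuous_subtype_val⟩ : C(D, Y)).Homotopic (s.comp r))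
    (hZ : HasCompressibleCover ι (univ : Set (Z × Z))) : HasCompressibleCover ι (D ×ˢ D) := by
  obtain ⟨U, hopen, hcover, hU⟩ := hZ
  have hval : IsOpenMap (Subtype.val : D → Y) := hD.isOpenMap_subtype_val
  refine ⟨fun j => Prod.map Subtype.val Subtype.val '' (Prod.map r r ⁻¹' U j),
    fun j => (hval.prodMap hval) _ ((hopen j).preimage (by fun_prop)), ?_,
    fun j => (hU j).image_preimage_prodMap hrs⟩
  rw [← image_iUnion, ← preimage_iUnion, hcover, preimage_univ, image_univ, range_prodMap,
    Subtype.range_coe]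

end HasCompressibleCover

end Compressible

theorem locallyFinite_Icc_natCast : LocallyFinite fun j : ℕ => Icc (j : ℝ) (j + 1) := by
  intro x
  refine ⟨Iio (⌊x⌋₊ + 1), Iio_mem_nhds (Nat.lt_floor_add_one x),
    (finite_le_nat ⌊x⌋₊).subset ?_⟩
  rintro j ⟨y, ⟨hjy, -⟩, hyx⟩
  exact Nat.lt_add_one_iff.1 (by exact_mod_cast hjy.trans_lt hyx)

section Bonding

variable {X : ℕ → Type*} (f : ∀ i, X i → X (i + 1))

/-- The composite `X k → X m` of the bonding maps `f k, …, f (m - 1)`. -/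
def bondingMap {k m : ℕ} (h : k ≤ m) : X k → X m := Nat.leRecOn h fun {j} => f j

theorem bondingMap_self (k : ℕ) (x : X k) : bondingMap f le_rfl x = x := Nat.leRecOn_self x

theorem bondingMap_succ {k m : ℕ} (h : k ≤ m) (x : X k) :
    bondingMap f (Nat.le_succ_of_le h) x = f m (bondingMap f h x) := Nat.leRecOn_succ h x

theorem bondingMap_apply {k m : ℕ} (h : k + 1 ≤ m) (x : X k) :
    bondingMap f h (f k x) = bondingMap f (Nat.le_of_succ_le h) x :=
  Nat.leRecOn_succ_left (next := fun {j} => f j) x _ h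

theorem continuous_bondingMap [∀ i, TopologicalSpace (X i)] (hf : ∀ i, Continuous (f i))
    {k m : ℕ} (h : k ≤ m) : Continuous (bondingMap f h) := by
  induction m, h using Nat.le_induction with
  | base => exact continuous_id.congr fun x => (bondingMap_self f k x).symm
  | succ m h ih => exact ((hf m).comp ih).congr fun x => (bondingMap_succ f h x).symm

end Bonding

namespace Telescope

variable {X : ℕ → Type*} [∀ i, TopologicalSpace (X i)] (f : ∀ i, X i → X (i + 1))

/-- The quotient map from the disjoint union of the cylinders `X i × [0,1]` to the telescope. -/
def mk : (Σ i, X i × I) → Telescope X f := Quot.mk _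

theorem isQuotientMap_mk : IsQuotientMap (mk f) := isQuotientMap_quot_mk

theorem mk_one (k : ℕ) (x : X k) : mk f ⟨k, x, 1⟩ = mk f ⟨k + 1, f k x, 0⟩ :=
  Quot.sound (.glue k x)

theorem continuous_mk_mk (k : ℕ) : Continuous fun p : X k × I => mk f ⟨k, p⟩ :=
  (isQuotientMap_mk f).continuous.comp continuous_sigmaMk

/-- The inclusion of `X m` at the bottom of the `m`-th cylinder, that is, at height `m`. -/
def levelInclusion (m : ℕ) : C(X m, Telescope X f) :=
  ⟨fun x => mk f ⟨m, x, 0⟩, (continuous_mk_mk f m).comp (by fun_prop)⟩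

/-- The height of a point of the telescope: the class of `(x, t)` in the `k`-th cylinder has height
`k + t`. -/
def height : Telescope X f → ℝ :=
  Quot.lift (fun s => s.1 + s.2.2) (by rintro _ _ ⟨k, x⟩; simp)

theorem continuous_height : Continuous (height f) := by
  refine (isQuotientMap_mk f).continuous_iff.2 (continuous_sigma fun k => ?_)
  change Continuous fun p : X k × I => (k : ℝ) + p.2
  fun_prop

theorem height_nonneg (a : Telescope X f) : 0 ≤ height f a := by
  obtain ⟨⟨k, x, t⟩, rfl⟩ := (isQuotientMap_mk f).surjective a
  exact add_nonneg k.cast_nonneg t.2.1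

/-- The open part of the telescope consisting of the points of height less than `m`. -/
def below (m : ℕ) : Set (Telescope X f) := {a | height f a < m}

theorem isOpen_below (m : ℕ) : IsOpen (below f m) :=
  isOpen_lt (continuous_height f) continuous_const

theorem index_le_of_add_lt {k m : ℕ} {t : I} (h : (k + t : ℝ) < m) : k ≤ m := by
  have : (k : ℝ) < m := (le_add_of_nonneg_right t.2.1).trans_lt h
  exact_mod_cast this.le

/-- The map to `X m` given by the bonding maps, as a partial function on the telescope with
domain `below f m`; partiality lets it be defined by descent to the quotient. -/
def toLevelPart (m : ℕ) : Telescope X f →. X m :=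
  Quot.lift
    (fun s => ⟨(s.1 + s.2.2 : ℝ) < m, fun h => bondingMap f (index_le_of_add_lt h) s.2.1⟩) (by
      rintro _ _ ⟨k, x⟩
      exact Part.ext' (by simp) fun _ _ => (bondingMap_apply f _ x).symm)

theorem toLevelPart_dom (m : ℕ) : (toLevelPart f m).Dom = below f m := by
  ext a
  obtain ⟨s, rfl⟩ := (isQuotientMap_mk f).surjective a
  exact Iff.rfl

/-- The projection of `below f m` to `X m` given by the bonding maps. -/
def toLevel (m : ℕ) (a : below f m) : X m :=
  (toLevelPart f m).fn a ((toLevelPart_dom f m).ge a.2)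

theorem toLevel_mk {k m : ℕ} {x : X k} {t : I} (h : mk f ⟨k, x, t⟩ ∈ below f m) :
    toLevel f m ⟨_, h⟩ = bondingMap f (index_le_of_add_lt h) x := rfl

theorem continuous_toLevel (hf : ∀ i, Continuous (f i)) (m : ℕ) : Continuous (toLevel f m) := by
  rw [((isQuotientMap_mk f).restrictPreimage_isOpen (isOpen_below f m)).continuous_iff,
    continuous_iff_continuousAt]
  rintro ⟨⟨k, x, t⟩, h⟩
  have hmk : IsOpenEmbedding (@Sigma.mk ℕ (fun i => X i × I) k) := .sigmaMk
  refine ((hmk.restrictPreimage (mk f ⁻¹' below f m)).continuousAt_iff (x := ⟨(x, t), h⟩)).1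
    (Continuous.continuousAt ?_)
  exact ((continuous_bondingMap f hf (index_le_of_add_lt h)).comp
    (continuous_fst.comp continuous_subtype_val)).congr fun p => (toLevel_mk f p.2).symm

/-- The path in the telescope that starts at the bottom point of `x : X k` and passes through
height `r` at time `r ≥ k`; it is constant for `r ≤ k`. -/
noncomputable def ray {k : ℕ} (x : X k) (r : ℝ) : Telescope X f :=
  mk f ⟨max k ⌊r⌋₊, bondingMap f (le_max_left _ _) x,
    projIcc 0 1 zero_le_one (r - (max k ⌊r⌋₊ : ℕ))⟩

theorem ray_eq_of_max_eq {k m : ℕ} (h : k ≤ m) (x : X k) {r : ℝ} (hm : max k ⌊r⌋₊ = m) :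
    ray f x r = mk f ⟨m, bondingMap f h x, projIcc 0 1 zero_le_one (r - m)⟩ := by
  subst hm
  rfl

theorem ray_eq {k m : ℕ} (h : k ≤ m) (x : X k) {r : ℝ}
    (hr : max (k : ℝ) r ∈ Icc (m : ℝ) (m + 1)) :
    ray f x r = mk f ⟨m, bondingMap f h x, projIcc 0 1 zero_le_one (r - m)⟩ := by
  obtain ⟨hmr, hrm⟩ := hr
  rcases (le_of_max_le_right hrm).lt_or_eq with hlt | rfl
  · have hfloor : ⌊r⌋₊ ≤ m := Nat.le_of_lt_succ ((Nat.floor_lt' m.succ_ne_zero).2 (by simpa))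
    refine ray_eq_of_max_eq f h x (le_antisymm (max_le h hfloor) ?_)
    rcases le_max_iff.1 hmr with hk | hr
    · exact le_max_of_le_left (by exact_mod_cast hk)
    · exact le_max_of_le_right (Nat.le_floor hr)
  · have hfloor : ⌊(m + 1 : ℝ)⌋₊ = m + 1 := by exact_mod_cast Nat.floor_natCast (m + 1)
    rw [ray_eq_of_max_eq f (Nat.le_succ_of_le h) x (by rw [hfloor, max_eq_right (by lia)]),
      bondingMap_succ, projIcc_of_le_left _ (by simp), projIcc_of_right_le _ (by simp)]
    exact (mk_one f m _).symm

theorem ray_apply {k : ℕ} (x : X k) {r : ℝ} (hr : k + 1 ≤ r) :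
    ray f (f k x) r = ray f x r := by
  have hfloor : k + 1 ≤ ⌊r⌋₊ := Nat.le_floor (by exact_mod_cast hr)
  rw [ray_eq_of_max_eq f hfloor _ (max_eq_right hfloor), bondingMap_apply,
    ray_eq_of_max_eq f (Nat.le_of_succ_le hfloor) x (max_eq_right (Nat.le_of_succ_le hfloor))]

theorem continuous_ray (hf : ∀ i, Continuous (f i)) (k : ℕ) :
    Continuous fun p : X k × ℝ => ray f p.1 p.2 := by
  have hcont : Continuous fun p : X k × ℝ => max (k : ℝ) p.2 - k := by fun_prop
  refine (locallyFinite_Icc_natCast.preimage_continuous hcont).continuous ?_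
    (fun j => isClosed_Icc.preimage hcont) fun j => ?_
  · refine iUnion_eq_univ_iff.2 fun p => ⟨⌊max (k : ℝ) p.2 - k⌋₊, ?_, (Nat.lt_floor_add_one _).le⟩
    exact Nat.floor_le (sub_nonneg.2 (le_max_left _ _))
  · have hpiece : Continuous fun p : X k × ℝ =>
        mk f ⟨k + j, bondingMap f (k.le_add_right j) p.1,
          projIcc 0 1 zero_le_one (p.2 - (k + j : ℕ))⟩ :=
      (continuous_mk_mk f (k + j)).comp <|
        ((continuous_bondingMap f hf _).comp continuous_fst).prodMk
          (continuous_projIcc.comp (by fun_prop))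
    refine hpiece.continuousOn.congr fun p hp => ray_eq f _ p.1 ?_
    push_cast
    exact ⟨by linarith [hp.1], by linarith [hp.2]⟩

/-- The point of the telescope obtained from `a` by raising it along the bonding maps to height
`max c (height f a)`. -/
noncomputable def raise (c : ℝ) : Telescope X f → Telescope X f :=
  Quot.lift (fun s => ray f s.2.1 (max c (s.1 + s.2.2))) (by
    rintro _ _ ⟨k, x⟩
    simp [ray_apply])

theorem continuous_raise (hf : ∀ i, Continuous (f i)) :
    Continuous fun p : Telescope X f × ℝ => raise f p.2 p.1 := by
  refine (isQuotientMap_mk f).continuous_lift_prod_left ?_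
  rw [← (Homeomorph.sigmaProdDistrib (Y := ℝ) (X := fun i => X i × I)).symm.comp_continuous_iff']
  refine continuous_sigma fun k => ?_
  have hparam : Continuous fun p : (X k × I) × ℝ => (p.1.1, max p.2 ((k : ℝ) + p.1.2)) := by
    fun_prop
  exact (continuous_ray f hf k).comp hparam

theorem raise_zero (a : Telescope X f) : raise f 0 a = a := by
  obtain ⟨⟨k, x, t⟩, rfl⟩ := (isQuotientMap_mk f).surjective a
  calc raise f 0 (mk f ⟨k, x, t⟩)
      = ray f x (k + t) := congrArg (ray f x) (max_eq_right (height_nonneg f (mk f ⟨k, x, t⟩)))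
    _ = mk f ⟨k, x, t⟩ := by
      rw [ray_eq f le_rfl x (by simp [t.2.1, t.2.2]), bondingMap_self,
        add_sub_cancel_left, projIcc_val]

theorem raise_eq_levelInclusion (m : ℕ) (a : below f m) :
    raise f m a = levelInclusion f m (toLevel f m a) := by
  obtain ⟨a, ha⟩ := a
  obtain ⟨⟨k, x, t⟩, rfl⟩ := (isQuotientMap_mk f).surjective a
  have hk : k ≤ m := index_le_of_add_lt ha
  calc raise f m (mk f ⟨k, x, t⟩)
      = ray f x m := congrArg (ray f x) (max_eq_left (le_of_lt ha))
    _ = mk f ⟨m, bondingMap f hk x, 0⟩ := by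
      rw [ray_eq f hk x (by simp [hk]), sub_self, projIcc_left]
      rfl
    _ = levelInclusion f m (toLevel f m ⟨_, ha⟩) :=
      congrArg (levelInclusion f m) (toLevel_mk f ha).symm

theorem below_inclusion_homotopic (hf : ∀ i, Continuous (f i)) (m : ℕ) :
    (⟨Subtype.val, continuous_subtype_val⟩ : C(below f m, Telescope X f)).Homotopic
      ((levelInclusion f m).comp ⟨toLevel f m, continuous_toLevel f hf m⟩) := by
  have hparam : Continuous fun p : I × below f m => ((p.2 : Telescope X f), (p.1 * m : ℝ)) := by
    fun_prop
  refine ⟨⟨⟨fun p => raise f (p.1 * m) p.2, (continuous_raise f hf).comp hparam⟩,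
    fun a => ?_, fun a => ?_⟩⟩
  · simpa using raise_zero f a
  · simpa using raise_eq_levelInclusion f m a

theorem hasCompressibleCover_below_prod_below {ι : Type*} (hf : ∀ i, Continuous (f i)) {m : ℕ}
    (hm : HasCompressibleCover ι (univ : Set (X m × X m))) :
    HasCompressibleCover ι (below f m ×ˢ below f m) :=
  hm.prod_self_of_homotopic (isOpen_below f m) (below_inclusion_homotopic f hf m)

/-- The pairs of points of the telescope whose larger height is within distance `1` of `m`. -/
def band (m : ℕ) : Set (Telescope X f × Telescope X f) :=
  {q | max (height f q.1) (height f q.2) ∈ Ioo (m - 1 : ℝ) (m + 1)}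

theorem isOpen_band (m : ℕ) : IsOpen (band f m) :=
  isOpen_Ioo.preimage <|
    ((continuous_height f).comp continuous_fst).max ((continuous_height f).comp continuous_snd)

theorem band_subset (m : ℕ) : band f m ⊆ below f (m + 1) ×ˢ below f (m + 1) := fun q hq => by
  simpa [below] using hq.2

theorem disjoint_band {l m : ℕ} (h : l + 2 ≤ m) : Disjoint (band f l) (band f m) := by
  have h' : (l + 2 : ℝ) ≤ m := by exact_mod_cast h
  exact disjoint_left.2 fun q hl hm => by linarith [hl.2, hm.1]

theorem pairwise_disjoint_band_parity (e : ℕ) :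
    Pairwise (Function.onFun Disjoint fun m => band f (2 * m + e)) :=
  (pairwise_disjoint_on _).2 fun _ _ h => disjoint_band f (by lia)

theorem iUnion_band : ⋃ m, band f m = univ := by
  refine iUnion_eq_univ_iff.2 fun q => ⟨⌊max (height f q.1) (height f q.2)⌋₊, ?_⟩
  have hfloor := Nat.floor_le (le_max_of_le_left (height_nonneg f q.1) : 0 ≤ max _ (height f q.2))
  exact ⟨by linarith, Nat.lt_floor_add_one _⟩

theorem iUnion_band_parity : ⋃ (e : Fin 2) (m : ℕ), band f (2 * m + e) = univ := by
  refine eq_univ_of_univ_subset ((iUnion_band f).ge.trans (iUnion_subset fun m => ?_))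
  refine subset_iUnion_of_subset ⟨m % 2, m.mod_lt two_pos⟩ (subset_iUnion_of_subset (m / 2) ?_)
  rw [Nat.div_add_mod]

end Telescope

theorem tc_telescope_le_general {X : ℕ → Type*} [∀ i, TopologicalSpace (X i)]
    {f : ∀ i, X i → X (i + 1)} (hf : ∀ i, Continuous (f i)) {ι : Type*}
    (hTC : ∀ i, HasCompressibleCover ι (univ : Set (X i × X i))) :
    HasCompressibleCover (Fin 2 × ι) (univ : Set (Telescope X f × Telescope X f)) := by
  have hband (m : ℕ) : HasCompressibleCover ι (Telescope.band f m) :=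
    (Telescope.hasCompressibleCover_below_prod_below f hf (hTC (m + 1))).mono
      (Telescope.isOpen_band f m) (Telescope.band_subset f m)
  rw [← Telescope.iUnion_band_parity f]
  exact .iUnion fun e =>
    .iUnion_of_disjoint (Telescope.pairwise_disjoint_band_parity f e) fun m => hband _

/-- If each `Xᵢ × Xᵢ` admits an open cover by `n` sets vertically compressible to the diagonal
of `Xᵢ` (i.e. `TC(Xᵢ) ≤ n`), then the square of the mapping telescope `X` of the sequence
`X₁ → X₂ → X₃ → ⋯` admits an open cover by `2n` sets vertically compressible to the diagonal
`Δ(X)` (i.e. `TC(X) ≤ 2n`). -/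
theorem tc_telescope_le (X : ℕ → Type*) [∀ i, TopologicalSpace (X i)]
    (f : ∀ i, X i → X (i + 1)) (hf : ∀ i, Continuous (f i))
    (n : ℕ) (hn : 0 < n)
    (hTC : ∀ i, ∃ U : Fin n → Set (X i × X i),
      (∀ j, IsOpen (U j)) ∧ ((⋃ j, U j) = Set.univ) ∧ ∀ j, VerticallyCompressible (U j)) :
    ∃ W : Fin (2 * n) → Set (Telescope X f × Telescope X f),
      (∀ k, IsOpen (W k)) ∧ ((⋃ k, W k) = Set.univ) ∧ ∀ k, VerticallyCompressible (W k) :=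
  (tc_telescope_le_general hf hTC).reindex finProdFinEquiv.symm
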